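/- arXiv:2406.05550 — 2 statements merged into one kernel-verified Lean document; each statement's English description precedes it below -/
import Mathlib

section
/- Let Ω be an algebraically closed field extension of a field k such that Ω has infinite transcendence degree over k and k is algebraically closed in Ω (every element of Ω algebraic over k lies in k). Then for every intermediate field K with k ⊆ K ⊆ Ω that is finitely generated as a field extension of k, there exists a field automorphism σ of Ω fixing k pointwise such that K and σ(K) are linearly disjoint over k, i.e., the map K ⊗ₖ σ(K) → Ω, a ⊗ b ↦ ab, is injective. -/
open scoped TensorProduct

/-!
Choose a transcendence basis `s` of `K / k` and complete it by a transcendence basis `t` of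
`Ω / K`. As `#s ≤ #t`, there is a copy of `s` inside `t`, and exchanging `s` with it extends to an
automorphism `σ` of the algebraic closure `Ω` of `k(s, t)`. Since `s` and `σ(s)` are jointly
algebraically independent, the kernel of `K ⊗ σ(K) → Ω` meets the polynomial ring on them trivially.
As `K ⊗ σ(K)` is algebraic over that ring, the kernel vanishes as soon as `K ⊗ σ(K)` is a domain.

Over an algebraically closed `k` a tensor product `A ⊗ B` of domains is a domain: with `B` finitely
generated, two nonzero elements stay nonzero in `A` under a common specialization `B → k`, by the
Nullstellensatz.
-/

universe u

theorem exists_algHom_apply_ne_zero {k A : Type*} [Field k] [IsAlgClosed k] [CommRing A]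
    [IsReduced A] [Algebra k A] [Algebra.FiniteType k A] {a : A} (ha : a ≠ 0) :
    ∃ φ : A →ₐ[k] k, φ a ≠ 0 := by
  have : IsJacobsonRing A := isJacobsonRing_of_finiteType (A := k)
  have h_jacobson : a ∉ (⊥ : Ideal A).jacobson := by
    rwa [IsJacobsonRing.out ‹_› Ideal.isRadical_bot]
  obtain ⟨m, hm, ham⟩ : ∃ m : Ideal A, m.IsMaximal ∧ a ∉ m := by
    simpa [Ideal.jacobson, Ideal.mem_sInf] using h_jacobson
  let : Field (A ⧸ m) := Ideal.Quotient.field m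
  have : Module.Finite k (A ⧸ m) := finite_of_finite_type_of_isJacobsonRing k (A ⧸ m)
  let ψ : A ⧸ m →ₐ[k] k := IsAlgClosed.lift
  refine ⟨ψ.comp (Ideal.Quotient.mkₐ k m), ?_⟩
  simpa [Ideal.Quotient.eq_zero_iff_mem] using ham

theorem exists_ne_zero_forall_productMap_ne_zero {k A B : Type*} [Field k] [CommRing A]
    [Algebra k A] [CommRing B] [Algebra k B] {x : A ⊗[k] B} (hx : x ≠ 0) :
    ∃ b : B, b ≠ 0 ∧ ∀ φ : B →ₐ[k] k, φ b ≠ 0 →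
      Algebra.TensorProduct.productMap (.id k A) ((Algebra.ofId k A).comp φ) x ≠ 0 := by
  classical
  let basis := Module.Basis.ofVectorSpace k A
  let coords := TensorProduct.equivFinsuppOfBasisLeft (N := B) basis
  have coords_specialize (φ : B →ₐ[k] k) (z : A ⊗[k] B) i :
      φ (coords z i) = basis.repr
        (Algebra.TensorProduct.productMap (.id k A) ((Algebra.ofId k A).comp φ) z) i := by
    induction z with
    | zero => simp
    | add u v hu hv => simp [hu, hv]
    | tmul u v => simp [coords, Algebra.ofId_apply, mul_comm u, ← Algebra.smul_def, mul_comm (φ v)]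
  obtain ⟨i, hi⟩ := DFunLike.ne_iff.mp (coords.map_ne_zero_iff.mpr hx)
  refine ⟨coords x i, hi, fun φ hφ h ↦ hφ ?_⟩
  rw [coords_specialize, h, map_zero, Finsupp.zero_apply]

theorem noZeroDivisors_tensorProduct_of_finiteType (k A B : Type*) [Field k] [IsAlgClosed k]
    [CommRing A] [NoZeroDivisors A] [Algebra k A] [CommRing B] [IsDomain B] [Algebra k B]
    [Algebra.FiniteType k B] : NoZeroDivisors (A ⊗[k] B) where
  eq_zero_or_eq_zero_of_mul_eq_zero {x y} hxy := by
    by_contra! ⟨hx, hy⟩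
    obtain ⟨b, hb, hbx⟩ := exists_ne_zero_forall_productMap_ne_zero hx
    obtain ⟨c, hc, hcy⟩ := exists_ne_zero_forall_productMap_ne_zero hy
    obtain ⟨φ, hφ⟩ := exists_algHom_apply_ne_zero (k := k) (mul_ne_zero hb hc)
    rw [map_mul, mul_ne_zero_iff] at hφ
    refine mul_ne_zero (hbx φ hφ.1) (hcy φ hφ.2) ?_
    rw [← map_mul, hxy, map_zero]

theorem subalgebra_baseChange_mono {R B : Type*} (A : Type*) [CommSemiring R] [CommSemiring A]
    [Algebra R A] [Semiring B] [Algebra R B] {C D : Subalgebra R B} (h : C ≤ D) :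
    C.baseChange A ≤ D.baseChange A := by
  have h_factor : Algebra.TensorProduct.map (.id A A) C.val =
      (Algebra.TensorProduct.map (.id A A) D.val).comp
        (Algebra.TensorProduct.map (.id A A) (Subalgebra.inclusion h)) := by
    rw [← Algebra.TensorProduct.map_comp, AlgHom.comp_id, Subalgebra.val_comp_inclusion]
  exact (congrArg AlgHom.range h_factor).trans_le (AlgHom.range_comp_le_range _ _)

theorem isDomain_tensorProduct_of_isAlgClosed (k A B : Type*) [Field k] [IsAlgClosed k]
    [CommRing A] [IsDomain A] [Algebra k A] [CommRing B] [IsDomain B] [Algebra k B] :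
    IsDomain (A ⊗[k] B) := by
  have : NoZeroDivisors (A ⊗[k] B) := by
    refine ⟨fun {x y} hxy ↦ ?_⟩
    obtain ⟨C, hC, hx⟩ := exists_fg_and_mem_baseChange x
    obtain ⟨D, hD, hy⟩ := exists_fg_and_mem_baseChange y
    have : Algebra.FiniteType k ↥(C ⊔ D) := (Subalgebra.fg_iff_finiteType _).mp (hC.sup hD)
    have := noZeroDivisors_tensorProduct_of_finiteType k A ↥(C ⊔ D)
    let incl := Algebra.TensorProduct.map (AlgHom.id A A) (C ⊔ D).val
    have h_incl : Function.Injective incl :=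
      Module.Flat.lTensor_preserves_injective_linearMap _ Subtype.val_injective
    obtain ⟨u, rfl⟩ : ∃ u, incl u = x := subalgebra_baseChange_mono A le_sup_left hx
    obtain ⟨v, rfl⟩ : ∃ v, incl v = y := subalgebra_baseChange_mono A le_sup_right hy
    rw [← map_mul, map_eq_zero_iff incl h_incl] at hxy
    simpa [map_eq_zero_iff incl h_incl] using hxy
  exact NoZeroDivisors.to_isDomain _

theorem injective_of_algebraicIndependent_comp {R A B ι : Type*} [CommRing R] [CommRing A]
    [IsDomain A] [CommRing B] [Algebra R A] [Algebra R B] {x : ι → A}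
    (hx : Algebra.IsAlgebraic (Algebra.adjoin R (Set.range x)) A) {f : A →ₐ[R] B}
    (hfx : AlgebraicIndependent R (f ∘ x)) : Function.Injective f := by
  refine (injective_iff_map_eq_zero f).mpr fun a ha ↦ ?_
  by_contra ha₀
  refine (RingHom.ker f).comap_ne_bot_of_algebraic_mem ha₀ ha (hx.isAlgebraic a) ?_
  refine (Submodule.eq_bot_iff _).mpr fun b hb ↦ ?_
  obtain ⟨p, rfl⟩ := (hfx.of_comp f).aevalEquiv.surjective b
  have hp : MvPolynomial.aeval (f ∘ x) p = 0 := by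
    rw [Function.comp_def, ← MvPolynomial.comp_aeval]
    simpa using hb
  rw [(map_eq_zero_iff _ hfx).mp hp, map_zero]

theorem isAlgebraic_adjoin_of_mapsTo {R A B : Type*} [CommRing R] [CommRing A] [CommRing B]
    [Algebra R A] [Algebra R B] {f : A →ₐ[R] B} (hf : Function.Injective f) {s : Set A}
    {t : Set B} (h : Set.MapsTo f s t) {a : A} (ha : IsAlgebraic (Algebra.adjoin R s) a) :
    IsAlgebraic (Algebra.adjoin R t) (f a) := by
  have h_adjoin : Algebra.adjoin R s ≤ (Algebra.adjoin R t).comap f :=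
    Algebra.adjoin_le fun b hb ↦ Algebra.subset_adjoin (h hb)
  let f₀ : Algebra.adjoin R s →ₐ[R] Algebra.adjoin R t :=
    (f.comp (Algebra.adjoin R s).val).codRestrict (Algebra.adjoin R t) fun b ↦ h_adjoin b.2
  have hf₀ : Function.Injective f₀ :=
    (AlgHom.injective_codRestrict ..).mpr (hf.comp Subtype.val_injective)
  exact ha.ringHom_of_comp_eq (f := f₀) (g := f) hf₀ rfl

section

variable {k A B ι κ : Type*} [Field k] [CommRing A] [CommRing B] [Algebra k A] [Algebra k B]
  [IsDomain (A ⊗[k] B)] {x : ι → A} {y : κ → B}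
  (hx : Algebra.IsAlgebraic (Algebra.adjoin k (Set.range x)) A)
  (hy : Algebra.IsAlgebraic (Algebra.adjoin k (Set.range y)) B)

include hx hy

theorem isAlgebraic_adjoin_tensorProduct :
    Algebra.IsAlgebraic (Algebra.adjoin k (Set.range
      (Sum.elim (fun i ↦ x i ⊗ₜ[k] (1 : B)) (fun j ↦ (1 : A) ⊗ₜ[k] y j)))) (A ⊗[k] B) := by
  let z : ι ⊕ κ → A ⊗[k] B := Sum.elim (fun i ↦ x i ⊗ₜ 1) (fun j ↦ 1 ⊗ₜ y j)
  have : Nontrivial A := RingHom.domain_nontrivial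
    (Algebra.TensorProduct.includeLeft : A →ₐ[k] A ⊗[k] B).toRingHom
  have : Nontrivial B := RingHom.domain_nontrivial
    (Algebra.TensorProduct.includeRight : B →ₐ[k] A ⊗[k] B).toRingHom
  have isAlgebraic_left (a : A) : IsAlgebraic (Algebra.adjoin k (Set.range z)) (a ⊗ₜ[k] (1 : B)) :=
    isAlgebraic_adjoin_of_mapsTo (f := (Algebra.TensorProduct.includeLeft : A →ₐ[k] A ⊗[k] B))
      (Algebra.TensorProduct.includeLeft_injective (algebraMap k B).injective)
      (by rintro _ ⟨i, rfl⟩; exact ⟨.inl i, rfl⟩)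
      (hx.isAlgebraic a)
  have isAlgebraic_right (b : B) : IsAlgebraic (Algebra.adjoin k (Set.range z)) ((1 : A) ⊗ₜ[k] b) :=
    isAlgebraic_adjoin_of_mapsTo (f := (Algebra.TensorProduct.includeRight : B →ₐ[k] A ⊗[k] B))
      (Algebra.TensorProduct.includeRight_injective (algebraMap k A).injective)
      (by rintro _ ⟨j, rfl⟩; exact ⟨.inr j, rfl⟩)
      (hy.isAlgebraic b)
  refine ⟨fun t ↦ ?_⟩
  induction t with
  | zero => exact isAlgebraic_zero
  | add u v hu hv => exact hu.add hv
  | tmul a b => simpa using (isAlgebraic_left a).mul (isAlgebraic_right b)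

theorem productMap_injective_of_algebraicIndependent {C : Type*} [CommRing C] [Algebra k C]
    {f : A →ₐ[k] C} {g : B →ₐ[k] C} (h : AlgebraicIndependent k (Sum.elim (f ∘ x) (g ∘ y))) :
    Function.Injective (Algebra.TensorProduct.productMap f g) := by
  refine injective_of_algebraicIndependent_comp (isAlgebraic_adjoin_tensorProduct hx hy) ?_
  convert h using 1
  ext (i | j) <;> simp

end

theorem exists_algEquiv_of_isTranscendenceBasis {R K L ι : Type*} [CommRing R] [Field K]
    [Field L] [IsAlgClosed K] [IsAlgClosed L] [Algebra R K] [Algebra R L] {v : ι → K} {w : ι → L}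
    (hv : IsTranscendenceBasis R v) (hw : IsTranscendenceBasis R w) :
    ∃ σ : K ≃ₐ[R] L, ∀ i, σ (v i) = w i := by
  have := IsAlgClosed.isAlgClosure_of_transcendence_basis v hv
  have := IsAlgClosed.isAlgClosure_of_transcendence_basis w hw
  let e : Algebra.adjoin R (Set.range v) ≃ₐ[R] Algebra.adjoin R (Set.range w) :=
    hv.1.aevalEquiv.symm.trans hw.1.aevalEquiv
  let σ := IsAlgClosure.equivOfEquiv K L e.toRingEquiv
  have hσ (p : MvPolynomial ι R) : σ (MvPolynomial.aeval v p) = MvPolynomial.aeval w p := by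
    simpa [e] using IsAlgClosure.equivOfEquiv_algebraMap K L e.toRingEquiv (hv.1.aevalEquiv p)
  exact ⟨.ofRingEquiv (f := σ) fun r ↦ by simpa using hσ (.C r), fun i ↦ by simpa using hσ (.X i)⟩

theorem isAlgClosed_of_forall_isAlgebraic_mem_range {F E : Type*} [Field F] [Field E]
    [Algebra F E] [IsAlgClosed E] (h : ∀ a : E, IsAlgebraic F a → a ∈ Set.range (algebraMap F E)) :
    IsAlgClosed F := by
  refine (IsAlgClosed.algebraicClosure_eq_bot_iff F E).mp (eq_bot_iff.mpr fun a ha ↦ ?_)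
  exact IntermediateField.mem_bot.mpr (h a (mem_algebraicClosure_iff.mp ha))

theorem trdeg_le_trdeg_of_not_finTrdeg {F : Type*} {E L : Type u} [Field F] [Field E] [Field L]
    [Algebra F E] [Algebra E L] [Algebra F L] [IsScalarTower F E L] [FinTrdeg F E]
    (h : ¬ FinTrdeg F L) : Algebra.trdeg F E ≤ Algebra.trdeg E L := by
  have h_infinite : ¬ FinTrdeg E L := fun _ ↦ h (FinTrdeg.trans F E L)
  rw [finTrdeg_iff_trdeg, not_lt] at h_infinite
  exact (trdeg_lt_aleph0 F E).le.trans h_infinite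

theorem exists_perm_sum_apply_inr {α β : Type*} (j : β ↪ α) :
    ∃ e : Equiv.Perm (α ⊕ β), ∀ i, e (.inr i) = .inl (j i) :=
  ⟨Equiv.Perm.viaEmbedding (Equiv.sumComm β β) (j.sumMap (.refl β)), fun i ↦
    Equiv.Perm.viaEmbedding_apply (Equiv.sumComm β β) (j.sumMap (.refl β)) (.inr i)⟩

theorem exists_aut_linearlyDisjoint_general
    {k Ω : Type*} [Field k] [Field Ω] [Algebra k Ω] [IsAlgClosed Ω]
    (K : IntermediateField k Ω) [IsDomain (K ⊗[k] K)]
    (hK : Algebra.trdeg k K ≤ Algebra.trdeg K Ω) :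
    ∃ σ : Ω ≃ₐ[k] Ω,
      Function.Injective
        (Algebra.TensorProduct.productMap K.val (K.map (σ : Ω →ₐ[k] Ω)).val) := by
  obtain ⟨s, hs⟩ := exists_isTranscendenceBasis k K
  obtain ⟨t, ht⟩ := exists_isTranscendenceBasis K Ω
  obtain ⟨j⟩ : Nonempty (s ↪ t) := by
    rwa [← Cardinal.le_def, hs.cardinalMk_eq_trdeg, ht.cardinalMk_eq_trdeg]
  let b : t ⊕ s → Ω := Sum.elim (↑) (algebraMap K Ω ∘ (↑))
  have hb : IsTranscendenceBasis k b := hs.sumElim_comp ht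
  obtain ⟨swap, h_swap⟩ := exists_perm_sum_apply_inr j
  obtain ⟨σ, hσ⟩ := exists_algEquiv_of_isTranscendenceBasis hb (hb.comp_equiv swap)
  let e : K ≃ₐ[k] K.map (σ : Ω →ₐ[k] Ω) := K.equivMap (σ : Ω →ₐ[k] Ω)
  have : IsDomain (K ⊗[k] K.map (σ : Ω →ₐ[k] Ω)) :=
    (Algebra.TensorProduct.congr (.refl : K ≃ₐ[k] K) e).symm.toMulEquiv.isDomain
  refine ⟨σ, productMap_injective_of_algebraicIndependent hs.isAlgebraic
    (e.isTranscendenceBasis hs).isAlgebraic ?_⟩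
  have h_inj : Function.Injective (Sum.elim .inr (.inl ∘ j) : s ⊕ s → t ⊕ s) :=
    Sum.inr_injective.sumElim (Sum.inl_injective.comp j.injective) (by simp)
  convert hb.1.comp _ h_inj using 1
  ext (i | i)
  · simp [b]
  · have : σ (i : K) = j i := by simpa [b, h_swap] using hσ (.inr i)
    simpa [b, e] using this

/-- Let `Ω` be an algebraically closed extension of a field `k` of infinite
transcendence degree over `k` (there is an infinite algebraically independent
subset), with `k` algebraically closed in `Ω`.  Then for every subfield `K` of
`Ω` finitely generated over `k`, there is an automorphism `σ` of `Ω` over `k`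
such that `K` and `σ(K)` are linearly disjoint over `k`, i.e. the multiplication
map `K ⊗[k] σ(K) → Ω` is injective. -/
theorem exists_aut_linearlyDisjoint
    {k Ω : Type*} [Field k] [Field Ω] [Algebra k Ω] [IsAlgClosed Ω]
    (htr : ∃ s : Set Ω, s.Infinite ∧ AlgebraicIndependent k ((↑) : s → Ω))
    (halg : ∀ a : Ω, IsAlgebraic k a → a ∈ Set.range (algebraMap k Ω))
    (K : IntermediateField k Ω) (hK : K.FG) :
    ∃ σ : Ω ≃ₐ[k] Ω,
      Function.Injective
        (Algebra.TensorProduct.productMap K.val (K.map (σ : Ω →ₐ[k] Ω)).val) := by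
  obtain ⟨s, hs_infinite, hs⟩ := htr
  have : IsAlgClosed k := isAlgClosed_of_forall_isAlgebraic_mem_range halg
  have := isDomain_tensorProduct_of_isAlgClosed k K K
  have : Algebra.EssFiniteType k K := IntermediateField.essFiniteType_iff.mpr hK
  have h_infinite : ¬ FinTrdeg k Ω := fun _ ↦ hs_infinite (finite_of_algebraicIndependent hs)
  exact exists_aut_linearlyDisjoint_general K (trdeg_le_trdeg_of_not_finTrdeg h_infinite)
end

section
/- Let f : A → B be a faithfully flat homomorphism of commutative rings and let M be an A-module. Then: (i) the map M → B ⊗_A M, m ↦ 1 ⊗ m, is injective; and (ii) the kernel of the map B ⊗_A M → B ⊗_A B ⊗_A M sending b ⊗ m to 1 ⊗ b ⊗ m − b ⊗ 1 ⊗ m equals the image of the map M → B ⊗_A M, m ↦ 1 ⊗ m. -/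
open scoped TensorProduct

/-!
Faithful flatness lets one test exactness after applying `B ⊗[A] -`. There the Amitsur complex has a
contracting homotopy, multiplication of the new factor of `B` into the adjacent one:
`c ⊗ b ⊗ m ↦ c * b ⊗ m`, and likewise one step further along.
-/

theorem exact_of_contracting_homotopy {R X Y Z : Type*} [Semiring R]
    [AddCommMonoid X] [AddCommMonoid Y] [AddCommMonoid Z] [Module R X] [Module R Y] [Module R Z]
    {f : X →ₗ[R] Y} {g : Y →ₗ[R] Z} (s : Y →ₗ[R] X) (t : Z →ₗ[R] Y)
    (hgf : g ∘ₗ f = 0) (hst : t ∘ₗ g + f ∘ₗ s = LinearMap.id) :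
    Function.Exact f g := by
  refine LinearMap.exact_of_comp_of_mem_range hgf fun y hy ↦ ⟨s y, ?_⟩
  calc f (s y) = t (g y) + f (s y) := by rw [hy, map_zero, zero_add]
    _ = y := LinearMap.congr_fun hst y

section Action

variable (A B N : Type*) [CommSemiring A] [Semiring B] [Algebra A B]
  [AddCommMonoid N] [Module A N] [Module B N] [IsScalarTower A B N]

/-- The action map `b ⊗ n ↦ b • n` of a `B`-module `N`, regarded as an `A`-linear map. For
`N = B ⊗[A] M` it multiplies the two factors of `B`. -/
noncomputable def actionMap : B ⊗[A] N →ₗ[A] N :=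
  TensorProduct.lift (Algebra.lsmul A A N).toLinearMap

@[simp]
theorem actionMap_tmul (b : B) (n : N) : actionMap A B N (b ⊗ₜ[A] n) = b • n :=
  rfl

end Action

section Amitsur

variable (A B M : Type*) [CommRing A] [Ring B] [Algebra A B] [AddCommGroup M] [Module A M]

/-- The differential `b ⊗ m ↦ 1 ⊗ b ⊗ m - b ⊗ 1 ⊗ m` of the Amitsur complex
`M → B ⊗[A] M → B ⊗[A] (B ⊗[A] M) → ⋯` with coefficients in `M`, out of its term `B ⊗[A] M`. -/
noncomputable def amitsurDifferential : B ⊗[A] M →ₗ[A] B ⊗[A] (B ⊗[A] M) :=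
  TensorProduct.mk A B (B ⊗[A] M) 1 - TensorProduct.map LinearMap.id (TensorProduct.mk A B M 1)

@[simp]
theorem amitsurDifferential_tmul (b : B) (m : M) :
    amitsurDifferential A B M (b ⊗ₜ m) = 1 ⊗ₜ (b ⊗ₜ m) - b ⊗ₜ (1 ⊗ₜ m) :=
  rfl

theorem amitsurDifferential_comp_mk_one :
    amitsurDifferential A B M ∘ₗ TensorProduct.mk A B M 1 = 0 := by
  ext m
  simp

theorem actionMap_comp_lTensor_amitsurDifferential_add :
    actionMap A B (B ⊗[A] (B ⊗[A] M)) ∘ₗ (amitsurDifferential A B M).lTensor B +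
      (TensorProduct.mk A B M 1).lTensor B ∘ₗ actionMap A B (B ⊗[A] M) = LinearMap.id := by
  ext c b m
  simp [TensorProduct.tmul_sub, TensorProduct.smul_tmul']

theorem exact_lTensor_mk_one_amitsurDifferential :
    Function.Exact ((TensorProduct.mk A B M 1).lTensor B)
      ((amitsurDifferential A B M).lTensor B) := by
  refine exact_of_contracting_homotopy _ _ ?_ (actionMap_comp_lTensor_amitsurDifferential_add A B M)
  rw [← LinearMap.lTensor_comp, amitsurDifferential_comp_mk_one, LinearMap.lTensor_zero]

theorem exact_mk_one_amitsurDifferential [Module.FaithfullyFlat A B] :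
    Function.Exact (TensorProduct.mk A B M 1) (amitsurDifferential A B M) :=
  Module.FaithfullyFlat.lTensor_reflects_exact A B _ _
    (exact_lTensor_mk_one_amitsurDifferential A B M)

end Amitsur

theorem amitsur_exactness_module_general
    (A B M : Type*) [CommRing A] [Ring B] [Algebra A B]
    [Module.FaithfullyFlat A B] [AddCommGroup M] [Module A M] :
    Function.Injective (TensorProduct.mk A B M 1) ∧
    LinearMap.ker
        ((TensorProduct.mk A B (B ⊗[A] M) 1 :
            B ⊗[A] M →ₗ[A] B ⊗[A] (B ⊗[A] M))
          - TensorProduct.map LinearMap.id (TensorProduct.mk A B M 1)) =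
      LinearMap.range (TensorProduct.mk A B M 1) :=
  ⟨(injective_iff_map_eq_zero _).2 fun m ↦
      (Module.FaithfullyFlat.one_tmul_eq_zero_iff A M m).1,
    (exact_mk_one_amitsurDifferential A B M).linearMap_ker_eq⟩

/-- Let `A → B` be a faithfully flat homomorphism of commutative rings and `M`
an `A`-module.  Then (i) the map `M → B ⊗[A] M`, `m ↦ 1 ⊗ m`, is injective, and
(ii) the kernel of `B ⊗[A] M → B ⊗[A] (B ⊗[A] M)`,
`b ⊗ m ↦ 1 ⊗ b ⊗ m - b ⊗ 1 ⊗ m`, equals the image of `m ↦ 1 ⊗ m`. -/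
theorem amitsur_exactness_module
    (A B M : Type u) [CommRing A] [CommRing B] [Algebra A B]
    [Module.FaithfullyFlat A B] [AddCommGroup M] [Module A M] :
    Function.Injective (TensorProduct.mk A B M 1) ∧
    LinearMap.ker
        ((TensorProduct.mk A B (B ⊗[A] M) 1 :
            B ⊗[A] M →ₗ[A] B ⊗[A] (B ⊗[A] M))
          - TensorProduct.map LinearMap.id (TensorProduct.mk A B M 1)) =
      LinearMap.range (TensorProduct.mk A B M 1) :=
  amitsur_exactness_module_general A B M
end
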